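/- arXiv:1810.07975 — 3 statements merged into one kernel-verified Lean document; each statement's English description precedes it below -/
import Mathlib

section
/- Let X be a real vector space with an n-norm ‖·,…,·‖ and let y₁,…,yₙ be linearly independent vectors in X. Fix m with 1 ≤ m ≤ n. A sequence (x_k) in X converges to x ∈ X with respect to the norms of the class-1 collection (i.e., ‖x_k − x‖*_j → 0 as k → ∞ for every j ∈ {1,…,n}) if and only if (x_k) converges to x with respect to the norms of the class-m collection (i.e., ‖x_k − x‖*_{i₁,…,i_m} → 0 as k → ∞ for every choice of indices i₁ < ⋯ < i_m in {1,…,n}). -/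
/-!
Each class-`m` functional is a finite sum of class-1 functionals, so class-1 convergence passes to
class `m`. Conversely, as `1 ≤ m ≤ n`, every index `j` lies in some `m`-element index set `S`, and
by nonnegativity the `j`-th class-1 functional is dominated by the class-`m` functional of `S`.
-/

open Filter

/-- An `n`-norm on a real vector space `X`: a function `N : (Fin n → X) → ℝ` that is
nonnegative, vanishes exactly on linearly dependent tuples, is invariant under
permutations of its arguments, is absolutely homogeneous in each argument, and is
subadditive in each argument. -/
structure IsNNorm (n : ℕ) (X : Type*) [AddCommGroup X] [Module ℝ X]
    (N : (Fin n → X) → ℝ) : Prop where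
  nonneg : ∀ v : Fin n → X, 0 ≤ N v
  eq_zero_iff : ∀ v : Fin n → X, N v = 0 ↔ ¬ LinearIndependent ℝ v
  perm_invariant : ∀ (v : Fin n → X) (σ : Equiv.Perm (Fin n)), N (v ∘ σ) = N v
  smul_arg : ∀ (j : Fin n) (α : ℝ) (v : Fin n → X),
    N (Function.update v j (α • v j)) = |α| * N v
  add_arg : ∀ (j : Fin n) (x x' : X) (v : Fin n → X),
    N (Function.update v j (x + x')) ≤
      N (Function.update v j x) + N (Function.update v j x')

/-- Given an `n`-norm `N` and linearly independent vectors `y 0, …, y (n-1)`, the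
class-1 functional `‖u‖*_j = ‖u, y₁, …, y_{j-1}, y_{j+1}, …, yₙ‖`, realized by replacing
the `j`-th vector of the tuple `y` by `u` (the `n`-norm is permutation invariant, so the
position of `u` in the tuple is immaterial). -/
def qnorm {n : ℕ} {X : Type*} [AddCommGroup X] [Module ℝ X]
    (N : (Fin n → X) → ℝ) (y : Fin n → X) (j : Fin n) (u : X) : ℝ :=
  N (Function.update y j u)

/-- A sequence converges w.r.t. the norms of the class-1 collection iff it converges
w.r.t. the norms of the class-m collection. -/
theorem converges_class_one_iff_converges_class_m
    {n : ℕ} {X : Type*} [AddCommGroup X] [Module ℝ X]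
    (N : (Fin n → X) → ℝ) (hN : IsNNorm n X N)
    (y : Fin n → X) (hy : LinearIndependent ℝ y)
    (m : ℕ) (hm1 : 1 ≤ m) (hmn : m ≤ n)
    (x : ℕ → X) (x₀ : X) :
    (∀ j : Fin n,
      Tendsto (fun k => qnorm N y j (x k - x₀)) atTop (nhds 0)) ↔
    (∀ S : Finset (Fin n), S.card = m →
      Tendsto (fun k => ∑ j ∈ S, qnorm N y j (x k - x₀)) atTop (nhds 0)) := by
  constructor
  · intro h S _
    simpa using tendsto_finsetSum S (fun j _ => h j)
  · intro h j
    obtain ⟨S, hjS, -, hS⟩ := Finset.exists_subsuperset_card_eq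
      (Finset.subset_univ {j}) (by simpa using hm1) (by simpa using hmn)
    refine squeeze_zero (fun k => hN.nonneg _) (fun k => ?_) (h S hS)
    exact Finset.single_le_sum (f := fun i => qnorm N y i (x k - x₀))
      (fun i _ => hN.nonneg _) (Finset.singleton_subset_iff.mp hjS)
end

section
/- Let X be a real vector space with an n-norm ‖·,…,·‖ and let y₁,…,yₙ be linearly independent vectors in X. Fix m with 1 ≤ m ≤ n. A sequence (x_k) in X is Cauchy with respect to the norms of the class-1 collection (i.e., for every ε > 0 there exists N such that ‖x_k − x_l‖*_j < ε for all k, l ≥ N and all j ∈ {1,…,n}) if and only if (x_k) is Cauchy with respect to the norms of the class-m collection (i.e., for every ε > 0 there exists N such that ‖x_k − x_l‖*_{i₁,…,i_m} < ε for all k, l ≥ N and every choice of indices i₁ < ⋯ < i_m in {1,…,n}). -/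
/-!
A class-`m` functional is a sum of `m` class-1 functionals, so a bound `ε / m` on each of the
latter bounds it by `ε`. Conversely every index `j` lies in some index set of size `m`, and as
all the terms are nonnegative, `‖·‖*_j` is at most the corresponding class-`m` functional.
-/

open Filter

/-- A sequence is Cauchy w.r.t. the norms of the class-1 collection iff it is Cauchy
w.r.t. the norms of the class-m collection. -/
theorem cauchy_class_one_iff_cauchy_class_m
    {n : ℕ} {X : Type*} [AddCommGroup X] [Module ℝ X]
    (N : (Fin n → X) → ℝ) (hN : IsNNorm n X N)
    (y : Fin n → X) (hy : LinearIndependent ℝ y)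
    (m : ℕ) (hm1 : 1 ≤ m) (hmn : m ≤ n)
    (x : ℕ → X) :
    (∀ ε > (0 : ℝ), ∃ N₀ : ℕ, ∀ k ≥ N₀, ∀ l ≥ N₀,
      ∀ j : Fin n, qnorm N y j (x k - x l) < ε) ↔
    (∀ ε > (0 : ℝ), ∃ N₀ : ℕ, ∀ k ≥ N₀, ∀ l ≥ N₀,
      ∀ S : Finset (Fin n), S.card = m →
        ∑ j ∈ S, qnorm N y j (x k - x l) < ε) := by
  constructor
  · intro h ε hε
    have hm : (0 : ℝ) < m := by exact_mod_cast hm1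
    obtain ⟨N₀, h₀⟩ := h (ε / m) (div_pos hε hm)
    refine ⟨N₀, fun k hk l hl S hS => ?_⟩
    have hne : S.Nonempty := Finset.card_pos.mp (by omega)
    calc ∑ j ∈ S, qnorm N y j (x k - x l)
        < ∑ _j ∈ S, ε / m := Finset.sum_lt_sum_of_nonempty hne fun j _ => h₀ k hk l hl j
      _ = ε := by
        rw [Finset.sum_const, hS, nsmul_eq_mul]
        field_simp
  · intro h ε hε
    obtain ⟨N₀, h₀⟩ := h ε hε
    refine ⟨N₀, fun k hk l hl j => ?_⟩
    -- Since `1 ≤ m ≤ n`, the singleton `{j}` extends to an index set of size `m`.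
    obtain ⟨S, hjS, hS⟩ := Finset.exists_superset_card_eq (s := {j}) (n := m)
      (by simpa using hm1) (by simpa using hmn)
    exact (Finset.single_le_sum (f := fun i => qnorm N y i (x k - x l))
      (fun i _ => hN.nonneg _) (hjS (Finset.mem_singleton_self j))).trans_lt
      (h₀ k hk l hl S hS)
end

section
/- Let X be a real vector space with an n-norm ‖·,…,·‖ and let y₁,…,yₙ be linearly independent vectors in X. Let S ⊆ {1,…,n} be a nonempty index set and define ‖u‖*_S := Σ_{j ∈ S} ‖u‖*_j, where ‖u‖*_j := ‖u, y₁,…,y_{j−1}, y_{j+1},…,yₙ‖. Then for u ∈ X one has ‖u‖*_S = 0 if and only if u ∈ span{y_i : i ∈ {1,…,n}, i ∉ S}; that is, the kernel of the class-|S| norm ‖·‖*_S is exactly the subspace spanned by the vectors y_i with i outside S. -/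
/-!
By definiteness of the `n`-norm, `‖u‖*_j = 0` says that replacing `y j` by `u` makes the tuple
dependent; since the other `y i` are independent, this means `u ∈ span {y i | i ≠ j}`
(`qnorm_eq_zero_iff`). A sum of nonnegative terms vanishes iff each term does, so the kernel of
`‖·‖*_S` is the intersection over `j ∈ S` of these spans. By uniqueness of coordinates with
respect to `y`, and because `S` is nonempty (so that `u` lies in the span of `y` at all), that
intersection is `span {y i | i ∉ S}` (`mem_span_image_compl_iff`).
-/

open Filter

theorem qnorm_eq_zero_iff {n : ℕ} {X : Type*} [AddCommGroup X] [Module ℝ X]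
    {N : (Fin n → X) → ℝ} (hN : IsNNorm n X N) {y : Fin n → X} (hy : LinearIndependent ℝ y)
    (j : Fin n) (u : X) :
    qnorm N y j u = 0 ↔ u ∈ Submodule.span ℝ (y '' {j}ᶜ) := by
  have heq : Set.EqOn (Function.update y j u) y {j}ᶜ := fun i hi =>
    Function.update_of_ne hi _ _
  have hins : insert j ({j}ᶜ : Set (Fin n)) = Set.univ := by
    ext i; simp [em]
  have hoff : LinearIndepOn ℝ (Function.update y j u) {j}ᶜ :=
    (linearIndepOn_congr heq).2 (hy.linearIndepOn _)
  rw [qnorm, hN.eq_zero_iff, ← linearIndepOn_univ_iff, ← hins,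
    linearIndepOn_insert (by simp), heq.image_eq, Function.update_self]
  simp [hoff]

theorem mem_span_image_compl_iff {ι X : Type*} [AddCommGroup X] [Module ℝ X]
    {y : ι → X} (hy : LinearIndependent ℝ y) {S : Finset ι} (hS : S.Nonempty) (u : X) :
    u ∈ Submodule.span ℝ (y '' {i | i ∉ S}) ↔
      ∀ j ∈ S, u ∈ Submodule.span ℝ (y '' {j}ᶜ) := by
  constructor
  · intro h j hj
    refine Submodule.span_mono (Set.image_mono ?_) h
    rintro i hi rfl
    exact hi hj
  · intro h
    obtain ⟨j₀, hj₀⟩ := hS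
    obtain ⟨l, -, rfl⟩ := (Finsupp.mem_span_image_iff_linearCombination ℝ).1 (h j₀ hj₀)
    refine (Finsupp.mem_span_image_iff_linearCombination ℝ).2 ⟨l, ?_, rfl⟩
    intro i hi hiS
    obtain ⟨l', hl', hll'⟩ := (Finsupp.mem_span_image_iff_linearCombination ℝ).1 (h i hiS)
    -- Independence forces the coordinates `l'`, which vanish at `i`, to coincide with `l`.
    obtain rfl : l' = l := hy hll'
    exact hl' hi rfl

/-- The kernel of the class-|S| norm ‖u‖*_S = Σ_{j ∈ S} ‖u‖*_j is exactly the span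
of the vectors yᵢ with i outside S. -/
theorem class_m_norm_eq_zero_iff
    {n : ℕ} {X : Type*} [AddCommGroup X] [Module ℝ X]
    (N : (Fin n → X) → ℝ) (hN : IsNNorm n X N)
    (y : Fin n → X) (hy : LinearIndependent ℝ y)
    (S : Finset (Fin n)) (hS : S.Nonempty) (u : X) :
    (∑ j ∈ S, qnorm N y j u) = 0 ↔
      u ∈ Submodule.span ℝ (y '' {i : Fin n | i ∉ S}) := by
  have hnonneg : ∀ j ∈ S, 0 ≤ qnorm N y j u := fun j _ => hN.nonneg _
  rw [mem_span_image_compl_iff hy hS, Finset.sum_eq_zero_iff_of_nonneg hnonneg]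
  exact forall₂_congr fun j _ => qnorm_eq_zero_iff hN hy j u
end
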